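/- arXiv:2406.15850 — 3 statements merged into one kernel-verified Lean document; each statement's English description precedes it below -/
import Mathlib

section
/- Suppose abstract kernels T̄_o : Z → P(Z), an initial grounding G₀ : Z → P(S) with G₀(z)(φ⁻¹{z}) = 1 for every z and p₀ = (p₀.map φ).bind G₀, and a transition grounding G : Z × O × Z → P(S) with G(z, o, z')(φ⁻¹{z'}) = 1 for every (z, o, z'), are such that B̄_t(o₀, …, o_{t−1}) = B_t(o₀, …, o_{t−1}) for every horizon t ≥ 0 and every option sequence (o₀, …, o_{t−1}). Define T̃_o(z) := ∫ G(z, o, z') d(T̄_o z)(z'). Then the ground dynamics factor through φ on reachable states: for every t ≥ 0, every option sequence (o₀, …, o_{t−1}), and every o ∈ O, the equality of probability measures T_o(s_t) = T̃_o(φ(s_t)) holds for B_t(o₀, …, o_{t−1})-almost every trajectory (s₀, …, s_t); i.e., φ is dynamics-preserving almost everywhere on reachable states. -/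
open MeasureTheory ProbabilityTheory

/-- The ground future-state distribution `B_t(o₀, …, o_{t−1})`: the law of `(S₀, …, S_t)` of the
Markov chain with `S₀ ~ p₀` and `S_{i+1} ~ T_{o_i}(S_i)`. -/
noncomputable def groundLaw {S O : Type*} [MeasurableSpace S]
    (p₀ : Measure S) (T : O → Kernel S S) :
    (t : ℕ) → (Fin t → O) → Measure (Fin (t + 1) → S)
  | 0, _ => p₀.map (fun s => fun _ => s)
  | t + 1, os =>
      (groundLaw p₀ T t (fun i => os i.castSucc)).bind fun traj =>
        (T (os (Fin.last t)) (traj (Fin.last t))).map (fun s' => Fin.snoc traj s')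

/-- The joint law of the simulated abstract trajectory `(Z₀, …, Z_t)` and its grounding
`(S₀, …, S_t)`: `Z₀ ~ p₀.map φ`, `S₀ ~ G₀(Z₀)`, `Z_{i+1} ~ T̄_{o_i}(Z_i)`,
`S_{i+1} ~ G(Z_i, o_i, Z_{i+1})`, each draw conditionally independent of the past given the
indicated variables. -/
noncomputable def simLaw {S Z O : Type*} [MeasurableSpace S] [MeasurableSpace Z]
    [MeasurableSpace O]
    (p₀ : Measure S) (φ : S → Z) (Tbar : O → Kernel Z Z)
    (G₀ : Kernel Z S) (G : Kernel (Z × O × Z) S) :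
    (t : ℕ) → (Fin t → O) → Measure ((Fin (t + 1) → S) × (Fin (t + 1) → Z))
  | 0, _ =>
      (p₀.map φ).bind fun z => (G₀ z).map (fun s => (fun _ => s, fun _ => z))
  | t + 1, os =>
      (simLaw p₀ φ Tbar G₀ G t (fun i => os i.castSucc)).bind fun p =>
        (Tbar (os (Fin.last t)) (p.2 (Fin.last t))).bind fun z' =>
          (G (p.2 (Fin.last t), os (Fin.last t), z')).map
            (fun s' => (Fin.snoc p.1 s', Fin.snoc p.2 z'))

/-- The grounded simulated (future-state) distribution `B̄_t(o₀, …, o_{t−1})`: the marginal law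
of `(S₀, …, S_t)` under `simLaw`. -/
noncomputable def simGroundLaw {S Z O : Type*} [MeasurableSpace S] [MeasurableSpace Z]
    [MeasurableSpace O]
    (p₀ : Measure S) (φ : S → Z) (Tbar : O → Kernel Z Z)
    (G₀ : Kernel Z S) (G : Kernel (Z × O × Z) S)
    (t : ℕ) (os : Fin t → O) : Measure (Fin (t + 1) → S) :=
  (simLaw p₀ φ Tbar G₀ G t os).map Prod.fst

/-! Under `simLaw` the grounded state almost surely lies in the fiber of the abstract state, so
`Z_t` may be replaced by `φ S_t`: seen from the ground, the simulation itself moves from `S_t`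
according to the kernel `T̃_o ∘ φ`. Appending the next state is a measurable equivalence, so
equality of the laws at horizon `t + 1` is equality of the composition-products of `B_t` with `T_o`
and with `T̃_o ∘ φ`, and a composition-product determines its kernel almost everywhere. -/

section Snoc

variable {X Y : Type*} [MeasurableSpace X] [MeasurableSpace Y] {n : ℕ}

/-- Appending a last entry to a tuple, as a measurable equivalence. Unlike `Fin.snocEquiv`, it takes
the tuple first, so that it acts directly on composition-products. -/
def finSnocMeasurableEquiv (X : Type*) [MeasurableSpace X] (n : ℕ) :
    (Fin n → X) × X ≃ᵐ (Fin (n + 1) → X) where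
  toFun q := Fin.snoc q.1 q.2
  invFun x := (Fin.init x, x (Fin.last n))
  left_inv q := by simp
  right_inv x := by simp
  measurable_toFun := by
    refine measurable_pi_iff.2 (Fin.lastCases ?_ fun i => ?_)
    · simpa using measurable_snd
    · simpa using! (measurable_pi_apply i).comp measurable_fst
  measurable_invFun := by
    simp only [Fin.init_def, Equiv.coe_fn_symm_mk]
    fun_prop

lemma measurable_finSnoc {f : Y → Fin n → X} {g : Y → X} (hf : Measurable f) (hg : Measurable g) :
    Measurable fun y => (Fin.snoc (f y) (g y) : Fin (n + 1) → X) :=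
  (finSnocMeasurableEquiv X n).measurable.comp (hf.prodMk hg)

end Snoc

section CompProd

variable {A B C D : Type*} [MeasurableSpace A] [MeasurableSpace B] [MeasurableSpace C]
  [MeasurableSpace D]

lemma bind_map_eq_map_compProd (μ : Measure A) [SFinite μ] (κ : Kernel A B) [IsSFiniteKernel κ]
    {f : A × B → C} (hf : Measurable f) :
    μ.bind (fun a => (κ a).map fun b => f (a, b)) = (μ ⊗ₘ κ).map f := by
  rw [Measure.compProd_eq_comp_prod, Measure.map_comp _ _ hf]
  congr with a : 1
  rw [Kernel.map_apply _ hf, Kernel.prod_apply, Kernel.id_apply, Measure.dirac_prod,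
    Measure.map_map hf measurable_prodMk_left]
  rfl

lemma map_prodMap_compProd_of_ae_map_eq {μ : Measure A} [SFinite μ] {κ : Kernel A C}
    [IsSFiniteKernel κ] {η : Kernel B D} [IsSFiniteKernel η] {f : A → B} (hf : Measurable f)
    {g : C → D} (hg : Measurable g) (h : ∀ᵐ a ∂μ, (κ a).map g = η (f a)) :
    (μ ⊗ₘ κ).map (Prod.map f g) = μ.map f ⊗ₘ η := by
  ext s hs
  rw [Measure.map_apply (hf.prodMap hg) hs, Measure.compProd_apply (hf.prodMap hg hs),
    Measure.compProd_apply hs, lintegral_map (Kernel.measurable_kernel_prodMk_left hs) hf]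
  refine lintegral_congr_ae ?_
  filter_upwards [h] with a ha
  rw [← ha, Measure.map_apply hg (measurable_prodMk_left hs)]
  rfl

end CompProd

section GroundLaw

variable {S O : Type*} [MeasurableSpace S] (p₀ : Measure S) (T : O → Kernel S S)

lemma groundLaw_succ [∀ o, IsSFiniteKernel (T o)] {t : ℕ} (os : Fin (t + 1) → O)
    [SFinite (groundLaw p₀ T t (Fin.init os))] :
    groundLaw p₀ T (t + 1) os =
      (groundLaw p₀ T t (Fin.init os) ⊗ₘ
          (T (os (Fin.last t))).comap (fun x => x (Fin.last t)) (measurable_pi_apply _)).map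
        (finSnocMeasurableEquiv S (t + 1)) := by
  rw [← bind_map_eq_map_compProd _ _ (finSnocMeasurableEquiv S (t + 1)).measurable]
  rfl

instance isFiniteMeasure_groundLaw [IsFiniteMeasure p₀] [∀ o, IsFiniteKernel (T o)] :
    ∀ (t : ℕ) (os : Fin t → O), IsFiniteMeasure (groundLaw p₀ T t os)
  | 0, _ => inferInstanceAs (IsFiniteMeasure (p₀.map _))
  | t + 1, os => by
    have := isFiniteMeasure_groundLaw t (Fin.init os)
    rw [groundLaw_succ]
    infer_instance

end GroundLaw

section SimLaw

variable {S Z O : Type*} [MeasurableSpace S] [MeasurableSpace Z] [MeasurableSpace O]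

/-- One step of the simulation under option `o`: from `z`, draw the next abstract state `z'` from
`Tbar z` and ground it by `G (z, o, z')`. Its second marginal is the kernel `T̃_o`. -/
noncomputable def simStep (Tbar : Kernel Z Z) (G : Kernel (Z × O × Z) S) (o : O) :
    Kernel Z (Z × S) :=
  Tbar ⊗ₖ G.comap (fun q : Z × Z => (q.1, o, q.2)) (by fun_prop)

instance isFiniteKernel_simStep (Tbar : Kernel Z Z) [IsFiniteKernel Tbar]
    (G : Kernel (Z × O × Z) S) [IsFiniteKernel G] (o : O) :
    IsFiniteKernel (simStep Tbar G o) :=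
  inferInstanceAs (IsFiniteKernel (_ ⊗ₖ _))

instance isSFiniteKernel_simStep (Tbar : Kernel Z Z) (G : Kernel (Z × O × Z) S) (o : O) :
    IsSFiniteKernel (simStep Tbar G o) :=
  inferInstanceAs (IsSFiniteKernel (_ ⊗ₖ _))

lemma simStep_apply (Tbar : Kernel Z Z) [IsSFiniteKernel Tbar] (G : Kernel (Z × O × Z) S)
    [IsSFiniteKernel G] (o : O) (z : Z) :
    simStep Tbar G o z = Tbar z ⊗ₘ G.comap (fun z' => (z, o, z')) (by fun_prop) :=
  Kernel.compProd_apply_eq_compProd_sectR _ _ z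

lemma snd_simStep_apply (Tbar : Kernel Z Z) [IsSFiniteKernel Tbar] (G : Kernel (Z × O × Z) S)
    [IsSFiniteKernel G] (o : O) (z : Z) :
    (simStep Tbar G o).snd z = (Tbar z).bind fun z' => G (z, o, z') := by
  rw [Kernel.snd_apply, simStep_apply]
  exact Measure.snd_compProd _ _

lemma ae_simStep_of_fiber [MeasurableEq Z] {φ : S → Z} (hφ : Measurable φ) (Tbar : Kernel Z Z)
    {G : Kernel (Z × O × Z) S} {o : O} {z : Z} (hG : ∀ z', ∀ᵐ s ∂G (z, o, z'), φ s = z') :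
    ∀ᵐ q ∂simStep Tbar G o z, φ q.2 = q.1 :=
  Kernel.ae_compProd_of_ae_ae (measurableSet_eq_fun (by fun_prop) measurable_fst)
    (.of_forall hG)

variable (p₀ : Measure S) (φ : S → Z) (Tbar : O → Kernel Z Z) (G₀ : Kernel Z S)
  (G : Kernel (Z × O × Z) S)

lemma simLaw_zero [SFinite p₀] [IsSFiniteKernel G₀] (os : Fin 0 → O) :
    simLaw p₀ φ Tbar G₀ G 0 os =
      (p₀.map φ ⊗ₘ G₀).map fun q => (fun _ => q.2, fun _ => q.1) := by
  rw [← bind_map_eq_map_compProd _ _ (by fun_prop)]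
  rfl

/-- Appends the outcome of one `simStep` to a simulated trajectory. -/
def simAppend {t : ℕ} (q : ((Fin (t + 1) → S) × (Fin (t + 1) → Z)) × (Z × S)) :
    (Fin (t + 2) → S) × (Fin (t + 2) → Z) :=
  (Fin.snoc q.1.1 q.2.2, Fin.snoc q.1.2 q.2.1)

lemma measurable_simAppend {t : ℕ} : Measurable (simAppend (S := S) (Z := Z) (t := t)) :=
  (measurable_finSnoc (by fun_prop) (by fun_prop)).prodMk
    (measurable_finSnoc (by fun_prop) (by fun_prop))

lemma simLaw_succ [∀ o, IsSFiniteKernel (Tbar o)] [IsSFiniteKernel G] {t : ℕ}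
    (os : Fin (t + 1) → O) [SFinite (simLaw p₀ φ Tbar G₀ G t (Fin.init os))] :
    simLaw p₀ φ Tbar G₀ G (t + 1) os =
      (simLaw p₀ φ Tbar G₀ G t (Fin.init os) ⊗ₘ
          (simStep (Tbar (os (Fin.last t))) G (os (Fin.last t))).comap
            (fun p => p.2 (Fin.last t)) (by fun_prop)).map simAppend := by
  rw [← bind_map_eq_map_compProd _ _ measurable_simAppend, simLaw]
  congr with p : 1
  rw [Kernel.comap_apply, simStep_apply,
    ← bind_map_eq_map_compProd (f := fun b => simAppend (p, b)) _ _
      (measurable_simAppend.comp measurable_prodMk_left)]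
  rfl

instance sFinite_simLaw [SFinite p₀] [∀ o, IsSFiniteKernel (Tbar o)] [IsSFiniteKernel G₀]
    [IsSFiniteKernel G] : ∀ (t : ℕ) (os : Fin t → O), SFinite (simLaw p₀ φ Tbar G₀ G t os)
  | 0, os => by
    rw [simLaw_zero]
    infer_instance
  | t + 1, os => by
    have := sFinite_simLaw t (Fin.init os)
    rw [simLaw_succ]
    infer_instance

variable {φ G₀ G}

lemma ae_simLaw_last_of_fiber [MeasurableEq Z] [SFinite p₀] [∀ o, IsSFiniteKernel (Tbar o)]
    [IsSFiniteKernel G₀] [IsSFiniteKernel G] (hφ : Measurable φ)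
    (hG₀ : ∀ z, ∀ᵐ s ∂G₀ z, φ s = z) (hG : ∀ z o z', ∀ᵐ s ∂G (z, o, z'), φ s = z')
    {t : ℕ} (os : Fin t → O) :
    ∀ᵐ p ∂simLaw p₀ φ Tbar G₀ G t os, φ (p.1 (Fin.last t)) = p.2 (Fin.last t) := by
  have measurableSet_fiber (t : ℕ) : MeasurableSet {p : (Fin (t + 1) → S) × (Fin (t + 1) → Z) |
      φ (p.1 (Fin.last t)) = p.2 (Fin.last t)} :=
    measurableSet_eq_fun (by fun_prop) (by fun_prop)
  cases t with
  | zero =>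
    rw [simLaw_zero, ae_map_iff (by fun_prop) (measurableSet_fiber 0)]
    exact Measure.ae_compProd_of_ae_ae (measurableSet_eq_fun (by fun_prop) measurable_fst)
      (.of_forall hG₀)
  | succ t =>
    rw [simLaw_succ, ae_map_iff measurable_simAppend.aemeasurable (measurableSet_fiber (t + 1))]
    simp only [simAppend, Fin.snoc_last]
    exact Measure.ae_compProd_of_ae_ae (measurableSet_eq_fun (by fun_prop) (by fun_prop))
      (.of_forall fun p => ae_simStep_of_fiber hφ _ (hG _ _))

lemma simGroundLaw_succ_of_ae_last [SFinite p₀] [∀ o, IsSFiniteKernel (Tbar o)]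
    [IsSFiniteKernel G₀] [IsSFiniteKernel G] (hφ : Measurable φ) {t : ℕ} (os : Fin (t + 1) → O)
    (h_last : ∀ᵐ p ∂simLaw p₀ φ Tbar G₀ G t (Fin.init os),
      φ (p.1 (Fin.last t)) = p.2 (Fin.last t)) :
    simGroundLaw p₀ φ Tbar G₀ G (t + 1) os =
      (simGroundLaw p₀ φ Tbar G₀ G t (Fin.init os) ⊗ₘ
          (simStep (Tbar (os (Fin.last t))) G (os (Fin.last t))).snd.comap
            (fun x => φ (x (Fin.last t))) (by fun_prop)).map
        (finSnocMeasurableEquiv S (t + 1)) := by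
  set κ := simStep (Tbar (os (Fin.last t))) G (os (Fin.last t))
  have h_snd : ∀ᵐ p ∂simLaw p₀ φ Tbar G₀ G t (Fin.init os),
      (κ.comap (fun p => p.2 (Fin.last t)) (by fun_prop) p).map Prod.snd =
        κ.snd.comap (fun x => φ (x (Fin.last t))) (by fun_prop) p.1 := by
    filter_upwards [h_last] with p hp
    rw [Kernel.comap_apply, Kernel.comap_apply, Kernel.snd_apply, hp]
  rw [simGroundLaw, simLaw_succ, simGroundLaw,
    ← map_prodMap_compProd_of_ae_map_eq measurable_fst measurable_snd h_snd,
    Measure.map_map measurable_fst measurable_simAppend,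
    Measure.map_map (finSnocMeasurableEquiv S (t + 1)).measurable (by fun_prop)]
  rfl

end SimLaw

theorem grounded_simulation_implies_dynamics_preserving_general
    {S Z O : Type*} [MeasurableSpace S] [MeasurableSpace.CountablyGenerated S]
    [MeasurableSpace Z] [MeasurableEq Z] [MeasurableSpace O]
    (p₀ : Measure S) [IsFiniteMeasure p₀] {φ : S → Z} (hφ : Measurable φ)
    (T : O → Kernel S S) [∀ o, IsFiniteKernel (T o)]
    (Tbar : O → Kernel Z Z) [∀ o, IsFiniteKernel (Tbar o)]
    (G₀ : Kernel Z S) [IsSFiniteKernel G₀] (hG₀ : ∀ z, ∀ᵐ s ∂G₀ z, φ s = z)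
    (G : Kernel (Z × O × Z) S) [IsFiniteKernel G]
    (hG : ∀ z o z', ∀ᵐ s ∂G (z, o, z'), φ s = z')
    {t : ℕ} (os : Fin t → O) (o : O)
    (hsim : simGroundLaw p₀ φ Tbar G₀ G t os = groundLaw p₀ T t os)
    (hsim_snoc : simGroundLaw p₀ φ Tbar G₀ G (t + 1) (Fin.snoc os o) =
      groundLaw p₀ T (t + 1) (Fin.snoc os o)) :
    ∀ᵐ traj ∂groundLaw p₀ T t os, T o (traj (Fin.last t)) =
      (Tbar o (φ (traj (Fin.last t)))).bind fun z' => G (φ (traj (Fin.last t)), o, z') := by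
  rw [groundLaw_succ, simGroundLaw_succ_of_ae_last p₀ Tbar hφ _
    (ae_simLaw_last_of_fiber p₀ Tbar hφ hG₀ hG _)] at hsim_snoc
  have h_compProd := (finSnocMeasurableEquiv S (t + 1)).map_measurableEquiv_injective hsim_snoc
  simp only [Fin.init_snoc, Fin.snoc_last, hsim] at h_compProd
  filter_upwards [Kernel.ae_eq_of_compProd_eq h_compProd] with traj h_traj
  rw [← snd_simStep_apply]
  exact h_traj.symm

/-- if abstract kernels `T̄_o`, an initial grounding `G₀` (supported on the fibers
of `φ`, with `p₀ = (p₀.map φ).bind G₀`) and a transition grounding `G` (supported on the fibers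
of `φ`) reproduce the ground future-state distribution at every horizon and for every option
sequence, then the ground dynamics factor through `φ` on reachable states: for every horizon
`t`, every option sequence, and every option `o`, `T_o(s_t) = T̃_o(φ(s_t))` (where
`T̃_o(z) := ∫ G(z,o,z') d(T̄_o z)(z')`) holds for `B_t`-almost every trajectory. -/
theorem grounded_simulation_implies_dynamics_preserving
    {S Z O : Type*} [MeasurableSpace S] [StandardBorelSpace S] [Nonempty S]
    [MeasurableSpace Z] [StandardBorelSpace Z] [Nonempty Z]
    [Fintype O] [MeasurableSpace O] [DiscreteMeasurableSpace O]
    (p₀ : Measure S) [IsProbabilityMeasure p₀]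
    (φ : S → Z) (hφ : Measurable φ)
    (T : O → Kernel S S) (hT : ∀ o, IsMarkovKernel (T o))
    (Tbar : O → Kernel Z Z) (hTbar : ∀ o, IsMarkovKernel (Tbar o))
    (G₀ : Kernel Z S) [IsMarkovKernel G₀]
    (hG₀supp : ∀ z, G₀ z (φ ⁻¹' {z}) = 1)
    (hp₀ : p₀ = (p₀.map φ).bind (fun z => G₀ z))
    (G : Kernel (Z × O × Z) S) [IsMarkovKernel G]
    (hGsupp : ∀ (z : Z) (o : O) (z' : Z), G (z, o, z') (φ ⁻¹' {z'}) = 1)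
    (hsim : ∀ (t : ℕ) (os : Fin t → O),
      simGroundLaw p₀ φ Tbar G₀ G t os = groundLaw p₀ T t os) :
    ∀ (t : ℕ) (os : Fin t → O) (o : O),
      ∀ᵐ traj ∂(groundLaw p₀ T t os),
        T o (traj (Fin.last t)) =
          (Tbar o (φ (traj (Fin.last t)))).bind
            (fun z' => G (φ (traj (Fin.last t)), o, z')) := by
  intro t os o
  exact grounded_simulation_implies_dynamics_preserving_general p₀ hφ T Tbar
    G₀ (fun z => (mem_ae_iff_prob_eq_one (hφ (measurableSet_singleton z))).2 (hG₀supp z))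
    G (fun z o z' => (mem_ae_iff_prob_eq_one (hφ (measurableSet_singleton z'))).2 (hGsupp z o z'))
    os o (hsim t os) (hsim (t + 1) (Fin.snoc os o))
end

section
/- Assume Rel is a support relation for G, that for every s̄ ∈ S̄ and every s with (s̄, s) ∈ Rel, T(s) = T̃(s̄) as probability measures on S, and that R̄(s̄) = ∫ R dG(s̄) for every s̄. If v satisfies the ground Bellman equation, then the grounded value function W(s̄) := ∫ v dG(s̄) is bounded and measurable and satisfies the abstract Bellman equation: W(s̄) = R̄(s̄) + γ ∫ W d(T̄ s̄) for every s̄ ∈ S̄. -/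
open MeasureTheory ProbabilityTheory

/-- The function `v` solves the Bellman equation of the Markov reward process with transition
kernel `κ`, discount `γ` and reward `r`. Values lie in a normed space, so that vector-valued
rewards are included. The integral is Bochner's, hence `0` wherever `v` is not integrable. -/
def SatisfiesBellman {X E : Type*} [MeasurableSpace X] [NormedAddCommGroup E] [NormedSpace ℝ E]
    (κ : Kernel X X) (γ : ℝ) (r v : X → E) : Prop :=
  ∀ x, v x = r x + γ • ∫ y, v y ∂(κ x)

section Grounding

variable {S Sb E : Type*} [MeasurableSpace S] [MeasurableSpace Sb]
  [NormedAddCommGroup E] [NormedSpace ℝ E]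
  {T : Kernel S S} {Tb : Kernel Sb Sb} {G : Kernel Sb S} {γ : ℝ} {R v : S → E}

/-- The function on abstract states obtained by averaging a function `f` of ground states over the
grounding kernel `G`. Both the abstract reward and the grounded value function are of this form. -/
noncomputable def groundedFunction (G : Kernel Sb S) (f : S → E) (sb : Sb) : E :=
  ∫ s, f s ∂(G sb)

/-- The grounding kernel `G` preserves dynamics: ground transitions `T` from almost every grounding
of an abstract state agree with an abstract transition `Tb` followed by grounding. The support
relation of `G` is encoded by the almost-everywhere quantifier. -/
def PreservesDynamics (G : Kernel Sb S) (T : Kernel S S) (Tb : Kernel Sb Sb) : Prop :=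
  ∀ sb, ∀ᵐ s ∂(G sb), T s = (G ∘ₖ Tb) sb

theorem preservesDynamics_of_support [IsMarkovKernel G] {Rel : Set (Sb × S)}
    (hRel : MeasurableSet Rel) (hsupp : ∀ sb, G sb {s | (sb, s) ∈ Rel} = 1)
    (hdyn : ∀ sb s, (sb, s) ∈ Rel → T s = (G ∘ₖ Tb) sb) :
    PreservesDynamics G T Tb := by
  intro sb
  have mem_rel : ∀ᵐ s ∂(G sb), (sb, s) ∈ Rel :=
    (mem_ae_iff_prob_eq_one (measurable_prodMk_left hRel)).2 (hsupp sb)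
  exact mem_rel.mono (hdyn sb)

theorem norm_groundedFunction_le [IsMarkovKernel G] {f : S → E} {C : ℝ} (hf : ∀ s, ‖f s‖ ≤ C)
    (sb : Sb) : ‖groundedFunction G f sb‖ ≤ C := by
  simpa [groundedFunction] using norm_integral_le_of_norm_le_const (μ := G sb) (.of_forall hf)

theorem integral_groundedFunction {X : Type*} [MeasurableSpace X] {κ : Kernel X Sb} {f : S → E}
    {x : X} (hf : Integrable f ((G ∘ₖ κ) x)) :
    ∫ sb, groundedFunction G f sb ∂(κ x) = ∫ s, f s ∂((G ∘ₖ κ) x) :=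
  (Kernel.integral_comp hf).symm

/-- Almost every grounding of `sb` has the same continuation value, so averaging `v` over `G sb`
only averages the reward. -/
theorem SatisfiesBellman.ae_eq_add_smul_integral_groundedFunction (hv : SatisfiesBellman T γ R v)
    (hdyn : PreservesDynamics G T Tb) {sb : Sb} (hint : Integrable v ((G ∘ₖ Tb) sb)) :
    ∀ᵐ s ∂(G sb), v s = R s + γ • ∫ sb', groundedFunction G v sb' ∂(Tb sb) := by
  filter_upwards [hdyn sb] with s hs
  rw [integral_groundedFunction hint, ← hs]
  exact hv s

theorem SatisfiesBellman.grounded [CompleteSpace E] [IsMarkovKernel G]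
    (hv : SatisfiesBellman T γ R v) (hdyn : PreservesDynamics G T Tb)
    (hint : ∀ sb, Integrable v (G sb)) (hint_comp : ∀ sb, Integrable v ((G ∘ₖ Tb) sb)) :
    SatisfiesBellman Tb γ (groundedFunction G R) (groundedFunction G v) := by
  intro sb
  set c := γ • ∫ sb', groundedFunction G v sb' ∂(Tb sb)
  have value_eq : ∀ᵐ s ∂(G sb), v s = R s + c :=
    hv.ae_eq_add_smul_integral_groundedFunction hdyn (hint_comp sb)
  have reward_integrable : Integrable R (G sb) :=
    ((hint sb).sub (integrable_const c)).congr
      (value_eq.mono fun s hs => sub_eq_of_eq_add hs)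
  calc ∫ s, v s ∂(G sb)
      = ∫ s, (R s + c) ∂(G sb) := integral_congr_ae value_eq
    _ = (∫ s, R s ∂(G sb)) + ∫ _, c ∂(G sb) :=
        integral_add reward_integrable (integrable_const c)
    _ = (∫ s, R s ∂(G sb)) + c := by rw [integral_const, probReal_univ, one_smul]

theorem grounded_value_satisfies_abstract_bellman_general [CompleteSpace E]
    [IsFiniteKernel Tb] [IsMarkovKernel G] (hdyn : PreservesDynamics G T Tb)
    (hvmeas : StronglyMeasurable v) (hvbdd : ∃ C, ∀ s, ‖v s‖ ≤ C)
    (hvBell : SatisfiesBellman T γ R v) :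
    (∃ C, ∀ sb, ‖groundedFunction G v sb‖ ≤ C) ∧
    StronglyMeasurable (groundedFunction G v) ∧
    SatisfiesBellman Tb γ (groundedFunction G R) (groundedFunction G v) := by
  obtain ⟨C, hC⟩ := hvbdd
  have integrable_value (μ : Measure S) [IsFiniteMeasure μ] : Integrable v μ :=
    .of_bound hvmeas.aestronglyMeasurable C (.of_forall hC)
  exact ⟨⟨C, norm_groundedFunction_le hC⟩, hvmeas.integral_kernel,
    hvBell.grounded hdyn (fun _ => integrable_value _) (fun _ => integrable_value _)⟩

end Grounding

/-- If `Rel` is a support relation for `G`, the grounding is dynamics-preserving on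
`Rel`, and `R̄(s̄) = ∫ R dG(s̄)`, then for any bounded measurable solution `v` of the ground
Bellman equation, the grounded value function `W(s̄) := ∫ v dG(s̄)` is bounded, measurable, and
satisfies the abstract Bellman equation `W(s̄) = R̄(s̄) + γ ∫ W d(T̄ s̄)`. -/
theorem grounded_value_satisfies_abstract_bellman
    {S Sb : Type*} [MeasurableSpace S] [MeasurableSpace Sb]
    (T : Kernel S S) [IsMarkovKernel T]
    (Tb : Kernel Sb Sb) [IsMarkovKernel Tb]
    (G : Kernel Sb S) [IsMarkovKernel G]
    (γ : ℝ) (hγ0 : 0 ≤ γ) (hγ1 : γ < 1)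
    (R : S → ℝ) (hRmeas : Measurable R) (hRbdd : ∃ C, ∀ s, |R s| ≤ C)
    (Rb : Sb → ℝ) (hRbmeas : Measurable Rb) (hRbbdd : ∃ C, ∀ sb, |Rb sb| ≤ C)
    (Rel : Set (Sb × S)) (hRelMeas : MeasurableSet Rel)
    (hRelSupp : ∀ sb, G sb {s | (sb, s) ∈ Rel} = 1)
    (hdyn : ∀ sb s, (sb, s) ∈ Rel → T s = (Tb sb).bind (fun sb' => G sb'))
    (hRbG : ∀ sb, Rb sb = ∫ s, R s ∂(G sb))
    (v : S → ℝ) (hvmeas : Measurable v) (hvbdd : ∃ C, ∀ s, |v s| ≤ C)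
    (hvBell : ∀ s, v s = R s + γ * ∫ s', v s' ∂(T s)) :
    (∃ C, ∀ sb, |∫ s, v s ∂(G sb)| ≤ C) ∧
    Measurable (fun sb => ∫ s, v s ∂(G sb)) ∧
    ∀ sb, (∫ s, v s ∂(G sb)) = Rb sb + γ * ∫ sb', (∫ s, v s ∂(G sb')) ∂(Tb sb) := by
  obtain rfl : Rb = groundedFunction G R := funext hRbG
  have hpres : PreservesDynamics G T Tb := preservesDynamics_of_support hRelMeas hRelSupp hdyn
  exact (grounded_value_satisfies_abstract_bellman_general hpres hvmeas.stronglyMeasurable hvbdd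
    hvBell).imp_right (.imp_left StronglyMeasurable.measurable)
end

section
/- (Value loss iterates, inductive bound) Assume Rel is a support relation for G, v satisfies the ground Bellman equation with ‖v‖_∞ ≤ Vmax, and for every (s̄, s) ∈ Rel: ‖T(s) − T̃(s̄)‖₁² ≤ ε_T and |R(s) − R̄(s̄)|² ≤ ε_R. Define the abstract value iterates v̄₀(s̄) := ∫ v dG(s̄) and v̄_{n+1}(s̄) := R̄(s̄) + γ ∫ v̄_n d(T̄ s̄). Then for every n ≥ 0 and every (s̄, s) ∈ Rel, |v(s) − v̄_{n+1}(s̄)| ≤ Σ_{i=0}^{n} γ^i · (√ε_R + γ · Vmax · √ε_T), and in particular |v(s) − v̄_{n+1}(s̄)| ≤ (√ε_R + γ · Vmax · √ε_T)/(1 − γ). -/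
open MeasureTheory ProbabilityTheory

/-- The total variation norm `‖μ - ν‖₁` of the difference of two finite measures, i.e. the total
mass of the total variation of the signed measure `μ - ν` (and junk value `0` if one of the
measures is not finite). -/
noncomputable def tvDist {α : Type*} [MeasurableSpace α] (μ ν : Measure α) : ℝ :=
  open scoped Classical in
  if h : IsFiniteMeasure μ ∧ IsFiniteMeasure ν then
    (((@Measure.toSignedMeasure α _ μ h.1) -
        (@Measure.toSignedMeasure α _ ν h.2)).totalVariation Set.univ).toReal
  else 0

/-- The abstract value iterates: `v̄₀(s̄) = ∫ v dG(s̄)` and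
`v̄_{n+1}(s̄) = R̄(s̄) + γ ∫ v̄_n d(T̄ s̄)`. -/
noncomputable def valueIter {S Sb : Type*} [MeasurableSpace S] [MeasurableSpace Sb]
    (Tb : Kernel Sb Sb) (G : Kernel Sb S) (Rb : Sb → ℝ) (γ : ℝ) (v : S → ℝ) :
    ℕ → Sb → ℝ
  | 0 => fun sb => ∫ s, v s ∂(G sb)
  | n + 1 => fun sb => Rb sb + γ * ∫ sb', valueIter Tb G Rb γ v n sb' ∂(Tb sb)

/-!
Average the loss over the grounding: `eₙ = sup |∫ v dG(s̄) - v̄ₙ(s̄)|` over `s̄`, so that `e₀ = 0`.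
One Bellman backup costs `√ε_R` for the reward, `γ Vmax √ε_T` for replacing `T s` by the grounded
transition (bounded functions pair with total variation), and `γ eₙ` for replacing `∫ v dG` by `v̄ₙ`
under `T̄ s̄`. This bounds `|v s - v̄ₙ₊₁ s̄|` on related pairs, hence also `eₙ₊₁`, because `G s̄` is
carried by the states related to `s̄`; unrolling the recursion gives the geometric sum.
-/

section Integral

variable {α β E : Type*} [MeasurableSpace α] [MeasurableSpace β]
  [NormedAddCommGroup E] [NormedSpace ℝ E]

lemma tvDist_eq_variation_real_univ (μ ν : Measure α) [IsFiniteMeasure μ] [IsFiniteMeasure ν] :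
    tvDist μ ν = (μ.toSignedMeasure - ν.toSignedMeasure).variation.real Set.univ := by
  rw [tvDist, dif_pos ⟨inferInstance, inferInstance⟩, SignedMeasure.totalVariation_eq_variation,
    measureReal_def]

lemma norm_integral_sub_integral_le_mul_tvDist {μ ν : Measure α} [IsFiniteMeasure μ]
    [IsFiniteMeasure ν] {f : α → E} {C : ℝ} (hfμ : Integrable f μ) (hfν : Integrable f ν)
    (hC : ∀ x, ‖f x‖ ≤ C) :
    ‖∫ x, f x ∂μ - ∫ x, f x ∂ν‖ ≤ C * tvDist μ ν := by
  set σ := μ.toSignedMeasure - ν.toSignedMeasure with hσ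
  let B : E →L[ℝ] ℝ →L[ℝ] E := (ContinuousLinearMap.lsmul ℝ ℝ).flip
  have hB : ‖B‖ ≤ 1 :=
    (ContinuousLinearMap.opNorm_flip _).trans_le ContinuousLinearMap.opNorm_lsmul_le
  have : IsFiniteMeasure σ.variation :=
    σ.totalVariation_eq_variation ▸ inferInstance
  have integral_sub_eq : ∫ x, f x ∂μ - ∫ x, f x ∂ν = σ.integral f B := by
    have hfμ' : μ.toSignedMeasure.Integrable f := by simpa [VectorMeasure.Integrable] using hfμ
    have hfν' : ν.toSignedMeasure.Integrable f := by simpa [VectorMeasure.Integrable] using hfν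
    rw [hσ, VectorMeasure.integral_sub_vectorMeasure hfμ' hfν',
      VectorMeasure.integral_toSignedMeasure, VectorMeasure.integral_toSignedMeasure]
  calc ‖∫ x, f x ∂μ - ∫ x, f x ∂ν‖
      = ‖σ.integral f B‖ := by rw [integral_sub_eq]
    _ ≤ ‖B‖ * ∫ x, ‖f x‖ ∂σ.variation := VectorMeasure.norm_integral_le_integral_norm
    _ ≤ ∫ x, ‖f x‖ ∂σ.variation := mul_le_of_le_one_left (by positivity) hB
    _ ≤ ∫ _, C ∂σ.variation :=
        integral_mono_of_nonneg (.of_forall fun x => norm_nonneg (f x)) (integrable_const C)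
          (.of_forall hC)
    _ = C * tvDist μ ν := by
        rw [integral_const, smul_eq_mul, mul_comm, tvDist_eq_variation_real_univ]

lemma norm_integral_sub_const_le_of_ae {μ : Measure α} [IsProbabilityMeasure μ] [CompleteSpace E]
    {f : α → E} {c : E} {B : ℝ} (hf : Integrable f μ) (hB : ∀ᵐ x ∂μ, ‖f x - c‖ ≤ B) :
    ‖∫ x, f x ∂μ - c‖ ≤ B := by
  simpa [integral_sub hf (integrable_const c)] using norm_integral_le_of_norm_le_const hB

lemma integral_bind_kernel {ν : Measure β} {κ : Kernel β α} {f : α → E}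
    (hf : Integrable f (ν.bind κ)) :
    ∫ x, f x ∂(ν.bind κ) = ∫ y, ∫ x, f x ∂(κ y) ∂ν :=
  Kernel.integral_comp (κ := Kernel.const Unit ν) (η := κ) (a := ()) hf

lemma norm_integral_sub_integral_le_mul_tvDist_bind_add {μ : Measure α} [IsFiniteMeasure μ]
    {ν : Measure β} [IsProbabilityMeasure ν] {κ : Kernel β α} [IsMarkovKernel κ]
    {f : α → E} {g : β → E} {C B : ℝ} (hf : StronglyMeasurable f) (hC : ∀ x, ‖f x‖ ≤ C)
    (hg : StronglyMeasurable g) (hB : ∀ y, ‖∫ x, f x ∂(κ y) - g y‖ ≤ B) :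
    ‖∫ x, f x ∂μ - ∫ y, g y ∂ν‖ ≤ C * tvDist μ (ν.bind κ) + B := by
  have hf_int (ρ : Measure α) [IsFiniteMeasure ρ] : Integrable f ρ :=
    .of_bound hf.aestronglyMeasurable C (.of_forall hC)
  have hbind : ∫ x, f x ∂(ν.bind κ) = ∫ y, ∫ x, f x ∂(κ y) ∂ν := integral_bind_kernel (hf_int _)
  have hκf_bound (y : β) : ‖∫ x, f x ∂(κ y)‖ ≤ C := by
    simpa using norm_integral_le_of_norm_le_const (μ := κ y) (.of_forall hC)
  have hκf : Integrable (fun y => ∫ x, f x ∂(κ y)) ν :=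
    .of_bound hf.integral_kernel.aestronglyMeasurable C (.of_forall hκf_bound)
  have hdiff : Integrable (fun y => ∫ x, f x ∂(κ y) - g y) ν :=
    .of_bound (hf.integral_kernel.sub hg).aestronglyMeasurable B (.of_forall hB)
  have hg_int : Integrable g ν := by simpa [Pi.sub_def] using hκf.sub hdiff
  calc ‖∫ x, f x ∂μ - ∫ y, g y ∂ν‖
      ≤ ‖∫ x, f x ∂μ - ∫ x, f x ∂(ν.bind κ)‖ + ‖∫ x, f x ∂(ν.bind κ) - ∫ y, g y ∂ν‖ :=
        norm_sub_le_norm_sub_add_norm_sub _ _ _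
    _ ≤ C * tvDist μ (ν.bind κ) + B := by
        gcongr
        · exact norm_integral_sub_integral_le_mul_tvDist (hf_int _) (hf_int _) hC
        · rw [hbind, ← integral_sub hκf hg_int]
          simpa using norm_integral_le_of_norm_le_const (μ := ν) (.of_forall hB)

end Integral

lemma geom_sum_le_inv_one_sub {K : Type*} [Field K] [LinearOrder K] [IsStrictOrderedRing K] {x : K}
    (hx0 : 0 ≤ x) (hx1 : x < 1) (n : ℕ) : ∑ i ∈ Finset.range n, x ^ i ≤ (1 - x)⁻¹ := by
  rw [inv_eq_one_div, le_div_iff₀ (sub_pos.2 hx1), geom_sum_mul_neg]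
  exact sub_le_self 1 (pow_nonneg hx0 n)

section ValueIteration

variable {S Sb : Type*} [MeasurableSpace S] [MeasurableSpace Sb]
  {T : Kernel S S} {Tb : Kernel Sb Sb} {G : Kernel Sb S} {γ δT δR Vmax : ℝ}
  {R v : S → ℝ} {Rb : Sb → ℝ} {Rel : Set (Sb × S)}

lemma measurable_valueIter (hRb : Measurable Rb) (hv : Measurable v) (n : ℕ) :
    Measurable (valueIter Tb G Rb γ v n) := by
  induction n with
  | zero => exact hv.stronglyMeasurable.integral_kernel.measurable
  | succ n ih => exact hRb.add (ih.stronglyMeasurable.integral_kernel.measurable.const_mul γ)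

lemma abs_sub_valueIter_succ_le [IsFiniteKernel T] [IsMarkovKernel Tb] [IsMarkovKernel G]
    (hγ0 : 0 ≤ γ) (hRb : Measurable Rb) (hv : Measurable v) (hvbdd : ∀ s, |v s| ≤ Vmax)
    {n : ℕ} {B : ℝ} (hB : ∀ sb, |∫ s, v s ∂(G sb) - valueIter Tb G Rb γ v n sb| ≤ B)
    {sb : Sb} {s : S} (hvs : v s = R s + γ * ∫ s', v s' ∂(T s))
    (hT : tvDist (T s) ((Tb sb).bind G) ≤ δT) (hR : |R s - Rb sb| ≤ δR) :
    |v s - valueIter Tb G Rb γ v (n + 1) sb| ≤ γ * B + (δR + γ * Vmax * δT) := by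
  have hVmax : 0 ≤ Vmax := (abs_nonneg _).trans (hvbdd s)
  have hint : |∫ s', v s' ∂(T s) - ∫ sb', valueIter Tb G Rb γ v n sb' ∂(Tb sb)|
      ≤ Vmax * tvDist (T s) ((Tb sb).bind G) + B :=
    norm_integral_sub_integral_le_mul_tvDist_bind_add hv.stronglyMeasurable hvbdd
      (measurable_valueIter hRb hv n).stronglyMeasurable hB
  calc |v s - valueIter Tb G Rb γ v (n + 1) sb|
      = |(R s - Rb sb)
          + γ * (∫ s', v s' ∂(T s) - ∫ sb', valueIter Tb G Rb γ v n sb' ∂(Tb sb))| := by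
        rw [hvs, valueIter]
        ring_nf
    _ ≤ |R s - Rb sb|
          + γ * |∫ s', v s' ∂(T s) - ∫ sb', valueIter Tb G Rb γ v n sb' ∂(Tb sb)| := by
        grw [abs_add_le, abs_mul, abs_of_nonneg hγ0]
    _ ≤ δR + γ * (Vmax * δT + B) := by
        gcongr
        exact hint.trans (by gcongr)
    _ = γ * B + (δR + γ * Vmax * δT) := by ring

lemma abs_integral_sub_valueIter_le [IsFiniteKernel T] [IsMarkovKernel Tb] [IsMarkovKernel G]
    (hγ0 : 0 ≤ γ) (hRb : Measurable Rb) (hRel : ∀ sb, ∀ᵐ s ∂(G sb), (sb, s) ∈ Rel)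
    (hv : Measurable v) (hvbdd : ∀ s, |v s| ≤ Vmax)
    (hvBell : ∀ s, v s = R s + γ * ∫ s', v s' ∂(T s))
    (hT : ∀ sb s, (sb, s) ∈ Rel → tvDist (T s) ((Tb sb).bind G) ≤ δT)
    (hR : ∀ sb s, (sb, s) ∈ Rel → |R s - Rb sb| ≤ δR) (n : ℕ) (sb : Sb) :
    |∫ s, v s ∂(G sb) - valueIter Tb G Rb γ v n sb| ≤
      (∑ i ∈ Finset.range n, γ ^ i) * (δR + γ * Vmax * δT) := by
  induction n generalizing sb with
  | zero => simp [valueIter]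
  | succ n ih =>
    rw [geom_sum_succ, add_mul, one_mul, mul_assoc]
    refine norm_integral_sub_const_le_of_ae
      (.of_bound hv.aestronglyMeasurable Vmax (.of_forall hvbdd)) ?_
    filter_upwards [hRel sb] with s hs
    exact abs_sub_valueIter_succ_le hγ0 hRb hv hvbdd ih (hvBell s) (hT sb s hs) (hR sb s hs)

theorem value_loss_iterates_general [IsFiniteKernel T] [IsMarkovKernel Tb] [IsMarkovKernel G]
    (hγ0 : 0 ≤ γ) (hγ1 : γ < 1) (hRb : Measurable Rb)
    (hRel : ∀ sb, ∀ᵐ s ∂(G sb), (sb, s) ∈ Rel) (hv : Measurable v) (hvbdd : ∀ s, |v s| ≤ Vmax)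
    (hvBell : ∀ s, v s = R s + γ * ∫ s', v s' ∂(T s))
    (hT : ∀ sb s, (sb, s) ∈ Rel → tvDist (T s) ((Tb sb).bind G) ≤ δT)
    (hR : ∀ sb s, (sb, s) ∈ Rel → |R s - Rb sb| ≤ δR)
    (n : ℕ) (sb : Sb) (s : S) (hs : (sb, s) ∈ Rel) :
    |v s - valueIter Tb G Rb γ v (n + 1) sb| ≤
        (∑ i ∈ Finset.range (n + 1), γ ^ i) * (δR + γ * Vmax * δT) ∧
      |v s - valueIter Tb G Rb γ v (n + 1) sb| ≤ (δR + γ * Vmax * δT) / (1 - γ) := by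
  have loss_le (m : ℕ) : |v s - valueIter Tb G Rb γ v (m + 1) sb| ≤
      (∑ i ∈ Finset.range (m + 1), γ ^ i) * (δR + γ * Vmax * δT) := by
    rw [geom_sum_succ, add_mul, one_mul, mul_assoc]
    exact abs_sub_valueIter_succ_le hγ0 hRb hv hvbdd
      (abs_integral_sub_valueIter_le hγ0 hRb hRel hv hvbdd hvBell hT hR m)
      (hvBell s) (hT sb s hs) (hR sb s hs)
  have step_nonneg : 0 ≤ δR + γ * Vmax * δT := by
    simpa using (abs_nonneg _).trans (loss_le 0)
  refine ⟨loss_le n, (loss_le n).trans ?_⟩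
  rw [div_eq_inv_mul]
  gcongr
  exact geom_sum_le_inv_one_sub hγ0 hγ1 (n + 1)

end ValueIteration

/-- Value loss iterates, inductive bound: under the support-relation hypotheses,
with a bounded solution `v` of the ground Bellman equation, the abstract value iterates satisfy
`|v(s) - v̄_{n+1}(s̄)| ≤ (Σ_{i=0}^{n} γ^i) (√ε_R + γ Vmax √ε_T)` and in particular
`|v(s) - v̄_{n+1}(s̄)| ≤ (√ε_R + γ Vmax √ε_T)/(1-γ)` for every `(s̄, s) ∈ Rel`. -/
theorem value_loss_iterates
    {S Sb : Type*} [MeasurableSpace S] [MeasurableSpace Sb]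
    (T : Kernel S S) [IsMarkovKernel T]
    (Tb : Kernel Sb Sb) [IsMarkovKernel Tb]
    (G : Kernel Sb S) [IsMarkovKernel G]
    (γ : ℝ) (hγ0 : 0 ≤ γ) (hγ1 : γ < 1)
    (R : S → ℝ) (hRmeas : Measurable R) (hRbdd : ∃ C, ∀ s, |R s| ≤ C)
    (Rb : Sb → ℝ) (hRbmeas : Measurable Rb) (hRbbdd : ∃ C, ∀ sb, |Rb sb| ≤ C)
    (Rel : Set (Sb × S)) (hRelMeas : MeasurableSet Rel)
    (hRelSupp : ∀ sb, G sb {s | (sb, s) ∈ Rel} = 1)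
    (εT εR Vmax : ℝ) (hεT : 0 ≤ εT) (hεR : 0 ≤ εR) (hVmax : 0 ≤ Vmax)
    (v : S → ℝ) (hvmeas : Measurable v) (hvbdd : ∀ s, |v s| ≤ Vmax)
    (hvBell : ∀ s, v s = R s + γ * ∫ s', v s' ∂(T s))
    (hT : ∀ sb s, (sb, s) ∈ Rel →
      tvDist (T s) ((Tb sb).bind (fun sb' => G sb')) ^ 2 ≤ εT)
    (hR : ∀ sb s, (sb, s) ∈ Rel → |R s - Rb sb| ^ 2 ≤ εR) :
    ∀ (n : ℕ) (sb : Sb) (s : S), (sb, s) ∈ Rel →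
      (|v s - valueIter Tb G Rb γ v (n + 1) sb| ≤
        (∑ i ∈ Finset.range (n + 1), γ ^ i) *
          (Real.sqrt εR + γ * Vmax * Real.sqrt εT)) ∧
      |v s - valueIter Tb G Rb γ v (n + 1) sb| ≤
        (Real.sqrt εR + γ * Vmax * Real.sqrt εT) / (1 - γ) := by
  have hRel (sb : Sb) : ∀ᵐ s ∂(G sb), (sb, s) ∈ Rel :=
    (mem_ae_iff_prob_eq_one (measurable_prodMk_left hRelMeas)).2 (hRelSupp sb)
  exact value_loss_iterates_general hγ0 hγ1 hRbmeas hRel hvmeas hvbdd hvBell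
    (fun sb s hs => Real.le_sqrt_of_sq_le (hT sb s hs))
    (fun sb s hs => Real.le_sqrt_of_sq_le (hR sb s hs))
end
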